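/- The Gaussian logarithmic Sobolev inequality: for every smooth function f on ℝⁿ with f² and |∇f|² integrable against γ_n, ∫ f² log(f²/‖f‖²_{L²(γ_n)}) dγ_n ≤ 2 ∫ |∇f|² dγ_n. -/

import Mathlib

open MeasureTheory Real

/-- The standard Gaussian probability measure `γ_n` on `ℝⁿ`. -/
noncomputable def gaussianMeasureN (n : ℕ) : Measure (EuclideanSpace ℝ (Fin n)) :=
  volume.withDensity
    (fun x => ENNReal.ofReal ((2 * π) ^ (-(n : ℝ) / 2) * exp (-‖x‖ ^ 2 / 2)))

/-!
The Gaussian is a product of one-dimensional Gaussians, and entropy is additive along products up to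
a marginal term whose Fisher information is controlled by convexity of `(u, g) ↦ ‖u‖² / g`; so the
inequality reduces to dimension one, in the form `Ent(g) ≤ (1 / 2) ∫ |g'|² / g` for positive `g`.

On a bounded interval, let `T` be the monotone map transporting the density `g exp (-V)` to a
multiple of `exp (-V)`. It fixes both endpoints, so comparing the two densities through `T` and
integrating by parts leaves no boundary terms, and strong convexity of `V` absorbs the cross term
`g' (T - x)` into `|g'|² / g`. Exhausting the line gives the one-dimensional inequality.

A general `f` is reached from `(χ f)² + ε` with `χ` a cutoff, using Fatou's lemma on the entropy.
-/

open Filter Function Set Topology ProbabilityTheory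
open scoped NNReal

section Entropy

variable {α β : Type*} [MeasurableSpace α] [MeasurableSpace β] {μ : Measure α} {ν : Measure β}

/-- The entropy functional `Ent_μ(g) = ∫ g log g dμ - (∫ g dμ) log (∫ g dμ)`. This form, without the
quotient `g / ∫ g dμ`, is additive over products for arbitrary `g`; it is the usual entropy when
`μ` is a probability measure. -/
noncomputable def entropy (μ : Measure α) (g : α → ℝ) : ℝ :=
  ∫ x, g x * log (g x) ∂μ - (∫ x, g x ∂μ) * log (∫ x, g x ∂μ)

lemma mul_log_div_integral_ae_eq {g : α → ℝ} (hg : Integrable g μ) (hg0 : 0 ≤ g) :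
    (fun x ↦ g x * log (g x / ∫ y, g y ∂μ)) =ᵐ[μ]
      fun x ↦ g x * log (g x) - g x * log (∫ y, g y ∂μ) := by
  rcases eq_or_ne (∫ y, g y ∂μ) 0 with hm | hm
  · filter_upwards [(integral_eq_zero_iff_of_nonneg hg0 hg).1 hm] with x hx
    simp [hx]
  · refine .of_forall fun x ↦ ?_
    by_cases hx : g x = 0
    · simp [hx]
    · simp only [log_div hx hm, mul_sub]

lemma integral_mul_log_div_integral {g : α → ℝ} (hg : Integrable g μ) (hg0 : 0 ≤ g)
    (hlog : Integrable (fun x ↦ g x * log (g x)) μ) :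
    ∫ x, g x * log (g x / ∫ y, g y ∂μ) ∂μ = entropy μ g := by
  rw [integral_congr_ae (mul_log_div_integral_ae_eq hg hg0), integral_sub hlog (hg.mul_const _),
    integral_mul_const, entropy]

lemma entropy_map {T : α → β} (hT : MeasurableEmbedding T) (g : β → ℝ) :
    entropy (μ.map T) g = entropy μ (g ∘ T) := by
  simp only [entropy, hT.integral_map, comp_apply]

lemma entropy_prod [SFinite μ] [SFinite ν] {g : α × β → ℝ} (hg : Integrable g (μ.prod ν))
    (hlog : Integrable (fun p ↦ g p * log (g p)) (μ.prod ν))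
    (hmarg : Integrable (fun y ↦ (∫ x, g (x, y) ∂μ) * log (∫ x, g (x, y) ∂μ)) ν) :
    entropy (μ.prod ν) g =
      ∫ y, entropy μ (fun x ↦ g (x, y)) ∂ν + entropy ν (fun y ↦ ∫ x, g (x, y) ∂μ) := by
  simp only [entropy]
  rw [integral_sub hlog.integral_prod_right hmarg, integral_prod_symm _ hlog,
    integral_prod_symm _ hg]
  ring

end Entropy

-- The integrand on the right dominates the tangent `2 l ‖u‖ - l² g`; take `l = ‖∫ u‖ / ∫ g`.
lemma sq_norm_integral_div_integral_le {α G : Type*} [MeasurableSpace α] {μ : Measure α}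
    [NormedAddCommGroup G] [NormedSpace ℝ G] {u : α → G} {g : α → ℝ} (hu : Integrable u μ)
    (hg : Integrable g μ) (hg0 : ∀ x, 0 < g x) (hug : Integrable (fun x ↦ ‖u x‖ ^ 2 / g x) μ) :
    ‖∫ x, u x ∂μ‖ ^ 2 / ∫ x, g x ∂μ ≤ ∫ x, ‖u x‖ ^ 2 / g x ∂μ := by
  set m := ∫ x, g x ∂μ
  set l := ‖∫ x, u x ∂μ‖ / m with hl
  have hl0 : 0 ≤ l := div_nonneg (norm_nonneg _) (integral_nonneg fun x ↦ (hg0 x).le)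
  calc ‖∫ x, u x ∂μ‖ ^ 2 / m = 2 * l * ‖∫ x, u x ∂μ‖ - l ^ 2 * m := by
        rcases eq_or_ne m 0 with hm | hm
        · simp [hl, hm]
        · rw [hl]; field_simp; ring
    _ ≤ 2 * l * ∫ x, ‖u x‖ ∂μ - l ^ 2 * m := by gcongr; exact norm_integral_le_integral_norm u
    _ = ∫ x, (2 * l * ‖u x‖ - l ^ 2 * g x) ∂μ := by
        rw [integral_sub (hu.norm.const_mul _) (hg.const_mul _), integral_const_mul,
          integral_const_mul]
    _ ≤ ∫ x, ‖u x‖ ^ 2 / g x ∂μ := by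
        refine integral_mono ((hu.norm.const_mul _).sub (hg.const_mul _)) hug fun x ↦ ?_
        rw [le_div_iff₀ (hg0 x)]
        linarith [sq_nonneg (‖u x‖ - l * g x)]

section TestDensity

variable {E F G : Type*} [NormedAddCommGroup E] [NormedSpace ℝ E]
  [NormedAddCommGroup F] [NormedSpace ℝ F] [NormedAddCommGroup G]

lemma norm_comp_inl_le [NormedSpace ℝ G] (L : E × F →L[ℝ] G) : ‖L ∘L .inl ℝ E F‖ ≤ ‖L‖ :=
  (L.opNorm_comp_le _).trans <|
    mul_le_of_le_one_right (norm_nonneg _) (ContinuousLinearMap.norm_inl_le_one ℝ E F)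

lemma norm_comp_inr_le [NormedSpace ℝ G] (L : E × F →L[ℝ] G) : ‖L ∘L .inr ℝ E F‖ ≤ ‖L‖ :=
  (L.opNorm_comp_le _).trans <|
    mul_le_of_le_one_right (norm_nonneg _) (ContinuousLinearMap.norm_inr_le_one ℝ E F)

/-- The densities on which logarithmic Sobolev inequalities are tested: `C¹` functions bounded
above, bounded away from `0`, and with bounded derivative. -/
structure IsTestDensity (g : E → ℝ) : Prop where
  contDiff : ContDiff ℝ 1 g
  exists_pos_le : ∃ ε > 0, ∀ x, ε ≤ g x
  exists_le : ∃ M, ∀ x, g x ≤ M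
  exists_norm_fderiv_le : ∃ K, ∀ x, ‖fderiv ℝ g x‖ ≤ K

namespace IsTestDensity

variable {g : E → ℝ}

lemma pos (hg : IsTestDensity g) (x : E) : 0 < g x :=
  let ⟨_, hε, hle⟩ := hg.exists_pos_le
  hε.trans_le (hle x)

lemma continuous_fderiv (hg : IsTestDensity g) : Continuous (fderiv ℝ g) :=
  hg.contDiff.continuous_fderiv one_ne_zero

lemma hasFDerivAt (hg : IsTestDensity g) (x : E) : HasFDerivAt g (fderiv ℝ g x) x :=
  (hg.contDiff.differentiable one_ne_zero x).hasFDerivAt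

lemma comp {φ : F → E} {A : F →L[ℝ] E} (hg : IsTestDensity g) (hφ : ∀ x, HasFDerivAt φ A x) :
    IsTestDensity (g ∘ φ) where
  contDiff := hg.contDiff.comp <| contDiff_one_iff_hasFDerivAt.2 ⟨fun _ ↦ A, continuous_const, hφ⟩
  exists_pos_le := let ⟨ε, hε, h⟩ := hg.exists_pos_le; ⟨ε, hε, fun x ↦ h _⟩
  exists_le := let ⟨M, h⟩ := hg.exists_le; ⟨M, fun x ↦ h _⟩
  exists_norm_fderiv_le := by
    obtain ⟨K, hK⟩ := hg.exists_norm_fderiv_le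
    refine ⟨K * ‖A‖, fun x ↦ ?_⟩
    rw [((hg.hasFDerivAt _).comp x (hφ x)).fderiv]
    exact (ContinuousLinearMap.opNorm_comp_le _ _).trans (by gcongr; exact hK _)

section Integrable

variable [MeasurableSpace E] [OpensMeasurableSpace E] {μ : Measure E} [IsFiniteMeasure μ]

lemma integrable_comp {φ : ℝ → ℝ} (hg : IsTestDensity g) (hφ : Continuous φ) :
    Integrable (fun x ↦ φ (g x)) μ := by
  obtain ⟨M, hM⟩ := hg.exists_le
  obtain ⟨C, hC⟩ := isCompact_Icc.exists_bound_of_continuousOn (hφ.continuousOn (s := Icc 0 M))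
  exact .of_bound (hφ.comp hg.contDiff.continuous).aestronglyMeasurable C
    (.of_forall fun x ↦ hC _ ⟨(hg.pos x).le, hM x⟩)

lemma integrable (hg : IsTestDensity g) : Integrable g μ :=
  hg.integrable_comp continuous_id

lemma integrable_mul_log (hg : IsTestDensity g) : Integrable (fun x ↦ g x * log (g x)) μ :=
  hg.integrable_comp continuous_mul_log

lemma integrable_norm_sq_div {L : E → G} {K : ℝ} (hg : IsTestDensity g) (hL : Continuous L)
    (hK : ∀ x, ‖L x‖ ≤ K) : Integrable (fun x ↦ ‖L x‖ ^ 2 / g x) μ := by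
  obtain ⟨ε, hε, hle⟩ := hg.exists_pos_le
  have hcont : Continuous fun x ↦ ‖L x‖ ^ 2 / g x :=
    (hL.norm.pow 2).div hg.contDiff.continuous fun x ↦ (hg.pos x).ne'
  refine .of_bound hcont.aestronglyMeasurable (K ^ 2 / ε) (.of_forall fun x ↦ ?_)
  rw [norm_of_nonneg (div_nonneg (sq_nonneg _) (hg.pos x).le)]
  gcongr
  exacts [hK x, hle x]

lemma integrable_norm_sq_fderiv_div (hg : IsTestDensity g) :
    Integrable (fun x ↦ ‖fderiv ℝ g x‖ ^ 2 / g x) μ :=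
  let ⟨_, hK⟩ := hg.exists_norm_fderiv_le
  hg.integrable_norm_sq_div hg.continuous_fderiv hK

end Integrable

section Prod

variable {g : E × F → ℝ}

lemma integrable_norm_sq_fderiv_comp_inl_div [MeasurableSpace (E × F)]
    [OpensMeasurableSpace (E × F)] {ρ : Measure (E × F)} [IsFiniteMeasure ρ]
    (hg : IsTestDensity g) : Integrable (fun p ↦ ‖fderiv ℝ g p ∘L .inl ℝ E F‖ ^ 2 / g p) ρ :=
  let ⟨_, hK⟩ := hg.exists_norm_fderiv_le
  hg.integrable_norm_sq_div (hg.continuous_fderiv.clm_comp_const _)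
    fun p ↦ (norm_comp_inl_le _).trans (hK p)

lemma integrable_norm_sq_fderiv_comp_inr_div [MeasurableSpace (E × F)]
    [OpensMeasurableSpace (E × F)] {ρ : Measure (E × F)} [IsFiniteMeasure ρ]
    (hg : IsTestDensity g) : Integrable (fun p ↦ ‖fderiv ℝ g p ∘L .inr ℝ E F‖ ^ 2 / g p) ρ :=
  let ⟨_, hK⟩ := hg.exists_norm_fderiv_le
  hg.integrable_norm_sq_div (hg.continuous_fderiv.clm_comp_const _)
    fun p ↦ (norm_comp_inr_le _).trans (hK p)

lemma comp_prodMk_right (hg : IsTestDensity g) (y : F) : IsTestDensity fun x ↦ g (x, y) :=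
  hg.comp fun x ↦ hasFDerivAt_prodMk_left x y

lemma continuous_fderiv_comp_inr (hg : IsTestDensity g) (y : F) :
    Continuous fun x ↦ fderiv ℝ g (x, y) ∘L .inr ℝ E F :=
  (hg.continuous_fderiv.comp (.prodMk_left y)).clm_comp_const _

variable [MeasurableSpace E] [OpensMeasurableSpace E] [SecondCountableTopology E] {μ : Measure E}

lemma integrable_fderiv_comp_inr [IsFiniteMeasure μ] (hg : IsTestDensity g) (y : F) :
    Integrable (fun x ↦ fderiv ℝ g (x, y) ∘L .inr ℝ E F) μ := by
  obtain ⟨K, hK⟩ := hg.exists_norm_fderiv_le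
  exact .of_bound (hg.continuous_fderiv_comp_inr y).aestronglyMeasurable K
    (.of_forall fun x ↦ (norm_comp_inr_le _).trans (hK _))

lemma hasFDerivAt_integral [IsFiniteMeasure μ] (hg : IsTestDensity g) (y : F) :
    HasFDerivAt (fun y ↦ ∫ x, g (x, y) ∂μ) (∫ x, fderiv ℝ g (x, y) ∘L .inr ℝ E F ∂μ) y := by
  obtain ⟨K, hK⟩ := hg.exists_norm_fderiv_le
  have hint (y : F) : Integrable (fun x ↦ g (x, y)) μ := (hg.comp_prodMk_right y).integrable
  exact hasFDerivAt_integral_of_dominated_of_fderiv_le univ_mem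
    (.of_forall fun y ↦ (hint y).aestronglyMeasurable) (hint y)
    (hg.integrable_fderiv_comp_inr y).aestronglyMeasurable
    (.of_forall fun x y _ ↦ (norm_comp_inr_le _).trans (hK _)) (integrable_const K)
    (.of_forall fun x y _ ↦ (hg.hasFDerivAt (x, y)).comp y (hasFDerivAt_prodMk_right x y))

lemma integral [IsProbabilityMeasure μ] (hg : IsTestDensity g) :
    IsTestDensity fun y : F ↦ ∫ x, g (x, y) ∂μ := by
  obtain ⟨K, hK⟩ := hg.exists_norm_fderiv_le
  have hint (y : F) : Integrable (fun x ↦ g (x, y)) μ := (hg.comp_prodMk_right y).integrable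
  refine ⟨contDiff_one_iff_hasFDerivAt.2 ⟨_, ?_, hg.hasFDerivAt_integral⟩, ?_, ?_, K, fun y ↦ ?_⟩
  · refine continuous_of_dominated
      (fun y ↦ (hg.integrable_fderiv_comp_inr y).aestronglyMeasurable)
      (fun y ↦ .of_forall fun x ↦ (norm_comp_inr_le _).trans (hK _)) (integrable_const K)
      (.of_forall fun x ↦ ?_)
    exact (hg.continuous_fderiv.comp (.prodMk_right x)).clm_comp_const _
  · obtain ⟨ε, hε, hle⟩ := hg.exists_pos_le
    refine ⟨ε, hε, fun y ↦ ?_⟩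
    simpa using integral_mono (integrable_const ε) (hint y) fun x ↦ hle (x, y)
  · obtain ⟨M, hM⟩ := hg.exists_le
    refine ⟨M, fun y ↦ ?_⟩
    simpa using integral_mono (hint y) (integrable_const M) fun x ↦ hM (x, y)
  · rw [(hg.hasFDerivAt_integral y).fderiv]
    simpa using norm_integral_le_of_norm_le_const (μ := μ)
      (.of_forall fun x ↦ (norm_comp_inr_le (fderiv ℝ g (x, y))).trans (hK _))

end Prod

end IsTestDensity

end TestDensity

lemma norm_sq_comp_inl_add_norm_sq_comp_inr {E F : Type*} [NormedAddCommGroup E]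
    [InnerProductSpace ℝ E] [CompleteSpace E] [NormedAddCommGroup F] [InnerProductSpace ℝ F]
    [CompleteSpace F] (L : WithLp 2 (E × F) →L[ℝ] ℝ) :
    ‖(L ∘L (WithLp.prodContinuousLinearEquiv 2 ℝ E F).symm) ∘L .inl ℝ E F‖ ^ 2 +
      ‖(L ∘L (WithLp.prodContinuousLinearEquiv 2 ℝ E F).symm) ∘L .inr ℝ E F‖ ^ 2 = ‖L‖ ^ 2 := by
  obtain ⟨v, rfl⟩ := (InnerProductSpace.toDual ℝ (WithLp 2 (E × F))).surjective L
  have hinl : (InnerProductSpace.toDual ℝ _ v ∘L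
      (WithLp.prodContinuousLinearEquiv 2 ℝ E F).symm) ∘L .inl ℝ E F =
      InnerProductSpace.toDual ℝ E v.fst := by
    ext; simp
  have hinr : (InnerProductSpace.toDual ℝ _ v ∘L
      (WithLp.prodContinuousLinearEquiv 2 ℝ E F).symm) ∘L .inr ℝ E F =
      InnerProductSpace.toDual ℝ F v.snd := by
    ext; simp
  rw [hinl, hinr]
  simp only [LinearIsometryEquiv.norm_map, WithLp.prod_norm_sq_eq_of_L2]

section LogSobolev

/-- The logarithmic Sobolev inequality with constant `c`, in its `L¹` form
`Ent_μ(g) ≤ (c / 2) ∫ ‖Dg‖² / g dμ` for positive densities `g`; the substitution `g = f ^ 2` gives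
`Ent_μ(f ^ 2) ≤ 2 c ∫ ‖Df‖² dμ`. -/
def SatisfiesLogSobolev {E : Type*} [NormedAddCommGroup E] [NormedSpace ℝ E] [MeasurableSpace E]
    (μ : Measure E) (c : ℝ≥0) : Prop :=
  ∀ ⦃g : E → ℝ⦄, IsTestDensity g → entropy μ g ≤ c / 2 * ∫ x, ‖fderiv ℝ g x‖ ^ 2 / g x ∂μ

namespace SatisfiesLogSobolev

lemma map {E F : Type*} [NormedAddCommGroup E] [NormedSpace ℝ E] [MeasurableSpace E] [BorelSpace E]
    [NormedAddCommGroup F] [NormedSpace ℝ F] [MeasurableSpace F] [BorelSpace F]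
    {μ : Measure E} {c : ℝ≥0} (h : SatisfiesLogSobolev μ c) (T : E ≃ₗᵢ[ℝ] F) :
    SatisfiesLogSobolev (μ.map T) c := by
  intro g hg
  have hT : MeasurableEmbedding T := T.toHomeomorph.measurableEmbedding
  have hTd (x : E) : HasFDerivAt T (T : E →L[ℝ] F) x := (T : E →L[ℝ] F).hasFDerivAt
  have hnorm (x : E) : ‖fderiv ℝ (g ∘ T) x‖ = ‖fderiv ℝ g (T x)‖ := by
    rw [((hg.hasFDerivAt _).comp x (hTd x)).fderiv]
    exact ContinuousLinearMap.opNorm_comp_linearIsometryEquiv _ _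
  simpa only [entropy_map hT, hT.integral_map, hnorm, comp_apply] using h (hg.comp hTd)

section Prod

variable {E F : Type*} [NormedAddCommGroup E] [NormedSpace ℝ E] [MeasurableSpace E]
  [NormedAddCommGroup F] [NormedSpace ℝ F] {μ : Measure E} {c : ℝ≥0} {g : E × F → ℝ}

lemma entropy_slice_le (h : SatisfiesLogSobolev μ c) (hg : IsTestDensity g) (y : F) :
    entropy μ (fun x ↦ g (x, y)) ≤
      c / 2 * ∫ x, ‖fderiv ℝ g (x, y) ∘L .inl ℝ E F‖ ^ 2 / g (x, y) ∂μ := by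
  have hfderiv (x : E) : fderiv ℝ (fun x ↦ g (x, y)) x = fderiv ℝ g (x, y) ∘L .inl ℝ E F :=
    ((hg.hasFDerivAt (x, y)).comp x (hasFDerivAt_prodMk_left x y)).fderiv
  simpa only [hfderiv] using h (hg.comp_prodMk_right y)

variable [BorelSpace E] [SecondCountableTopology E] [MeasurableSpace F] [BorelSpace F]
  [SecondCountableTopology F] {ν : Measure F} [IsProbabilityMeasure μ] [IsProbabilityMeasure ν]

lemma entropy_marginal_le (h : SatisfiesLogSobolev ν c) (hg : IsTestDensity g) :
    entropy ν (fun y ↦ ∫ x, g (x, y) ∂μ) ≤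
      c / 2 * ∫ p, ‖fderiv ℝ g p ∘L .inr ℝ E F‖ ^ 2 / g p ∂μ.prod ν := by
  obtain ⟨K, hK⟩ := hg.exists_norm_fderiv_le
  have hmarg : IsTestDensity fun y ↦ ∫ x, g (x, y) ∂μ := hg.integral
  refine (h hmarg).trans ?_
  rw [integral_prod_symm _ hg.integrable_norm_sq_fderiv_comp_inr_div]
  gcongr
  · exact hmarg.integrable_norm_sq_fderiv_div
  · exact hg.integrable_norm_sq_fderiv_comp_inr_div.integral_prod_right
  · intro y
    dsimp only
    rw [(hg.hasFDerivAt_integral y).fderiv]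
    exact sq_norm_integral_div_integral_le (hg.integrable_fderiv_comp_inr y)
      (hg.comp_prodMk_right y).integrable (fun x ↦ hg.pos _)
      ((hg.comp_prodMk_right y).integrable_norm_sq_div (hg.continuous_fderiv_comp_inr y)
        fun x ↦ (norm_comp_inr_le _).trans (hK _))

lemma entropy_prod_le (hμ : SatisfiesLogSobolev μ c) (hν : SatisfiesLogSobolev ν c)
    (hg : IsTestDensity g) :
    entropy (μ.prod ν) g ≤ c / 2 * ∫ p, (‖fderiv ℝ g p ∘L .inl ℝ E F‖ ^ 2 / g p +
      ‖fderiv ℝ g p ∘L .inr ℝ E F‖ ^ 2 / g p) ∂μ.prod ν := by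
  have hinl : Integrable (fun p ↦ ‖fderiv ℝ g p ∘L .inl ℝ E F‖ ^ 2 / g p) (μ.prod ν) :=
    hg.integrable_norm_sq_fderiv_comp_inl_div
  have hmarg : Integrable (fun y ↦ (∫ x, g (x, y) ∂μ) * log (∫ x, g (x, y) ∂μ)) ν :=
    hg.integral.integrable_mul_log
  rw [integral_add hinl hg.integrable_norm_sq_fderiv_comp_inr_div, mul_add,
    integral_prod_symm _ hinl, ← integral_const_mul,
    entropy_prod hg.integrable hg.integrable_mul_log hmarg]
  gcongr
  · exact hg.integrable_mul_log.integral_prod_right.sub hmarg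
  · exact hinl.integral_prod_right.const_mul _
  · exact fun y ↦ hμ.entropy_slice_le hg y
  · exact hν.entropy_marginal_le hg

end Prod

lemma prod {E F : Type*} [NormedAddCommGroup E] [InnerProductSpace ℝ E] [CompleteSpace E]
    [MeasurableSpace E] [BorelSpace E] [SecondCountableTopology E] [NormedAddCommGroup F]
    [InnerProductSpace ℝ F] [CompleteSpace F] [MeasurableSpace F] [BorelSpace F]
    [SecondCountableTopology F] {μ : Measure E} {ν : Measure F} [IsProbabilityMeasure μ]
    [IsProbabilityMeasure ν] {c : ℝ≥0} (hμ : SatisfiesLogSobolev μ c)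
    (hν : SatisfiesLogSobolev ν c) :
    SatisfiesLogSobolev ((μ.prod ν).map (WithLp.toLp 2)) c := by
  intro g hg
  let T := (WithLp.prodContinuousLinearEquiv 2 ℝ E F).symm
  have hT : MeasurableEmbedding (WithLp.toLp 2 : E × F → WithLp 2 (E × F)) :=
    T.toHomeomorph.measurableEmbedding
  have hTd (p : E × F) : HasFDerivAt (WithLp.toLp 2) (T : E × F →L[ℝ] WithLp 2 (E × F)) p :=
    (T : E × F →L[ℝ] WithLp 2 (E × F)).hasFDerivAt
  have hfderiv (p : E × F) : fderiv ℝ (g ∘ WithLp.toLp 2) p = fderiv ℝ g (WithLp.toLp 2 p) ∘L T :=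
    ((hg.hasFDerivAt _).comp p (hTd p)).fderiv
  rw [entropy_map hT, hT.integral_map]
  refine (hμ.entropy_prod_le hν (hg.comp hTd)).trans_eq ?_
  congr with p
  rw [hfderiv, ← add_div, norm_sq_comp_inl_add_norm_sq_comp_inr]
  rfl

end SatisfiesLogSobolev

end LogSobolev

section MonotoneTransport

variable {a b : ℝ}

lemma exists_transport_fixing_endpoints {p q : ℝ → ℝ} (hab : a ≤ b) (hpc : Continuous p)
    (hqc : Continuous q) (hp : ∀ x, 0 ≤ p x) (hq : ∀ x, 0 < q x)
    (hpq : ∫ x in a..b, p x = ∫ x in a..b, q x) :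
    ∃ T : ℝ → ℝ, T a = a ∧ T b = b ∧
      ∀ x ∈ Icc a b, HasDerivWithinAt T (p x / q (T x)) (Icc a b) x := by
  let P (x : ℝ) : ℝ := ∫ y in a..x, p y
  let Q (x : ℝ) : ℝ := ∫ y in a..x, q y
  have hP (x : ℝ) : HasDerivAt P (p x) x := (hpc.integral_hasStrictDerivAt a x).hasDerivAt
  have hQ (x : ℝ) : HasStrictDerivAt Q (q x) x := hqc.integral_hasStrictDerivAt a x
  have hPmono : Monotone P := monotone_of_hasDerivAt_nonneg hP hp
  have hQmono : StrictMono Q := strictMono_of_hasDerivAt_pos (fun x ↦ (hQ x).hasDerivAt) hq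
  have hQc : Continuous Q := continuous_iff_continuousAt.2 fun x ↦ (hQ x).hasDerivAt.continuousAt
  have hPa : P a = Q a := by simp [P, Q]
  have hsolve : ∀ x ∈ Icc a b, ∃ t, Q t = P x := fun x hx ↦
    mem_range_of_exists_le_of_exists_ge hQc ⟨a, hPa ▸ hPmono hx.1⟩ ⟨b, (hPmono hx.2).trans_eq hpq⟩
  choose! T hT using hsolve
  refine ⟨T, hQmono.injective ((hT a (left_mem_Icc.2 hab)).trans hPa),
    hQmono.injective ((hT b (right_mem_Icc.2 hab)).trans hpq), fun x hx ↦ ?_⟩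
  have hne : q (T x) ≠ 0 := (hq _).ne'
  have hinv := ((hQ (T x)).to_localInverse hne).hasDerivAt
  have hright := (hQ (T x)).eventually_right_inverse hne
  rw [hT x hx] at hinv hright
  rw [div_eq_inv_mul]
  refine (hinv.comp x (hP x)).hasDerivWithinAt.congr_of_eventuallyEq_of_mem ?_ hx
  filter_upwards [((hP x).continuousAt.eventually hright).filter_mono nhdsWithin_le_nhds,
    self_mem_nhdsWithin] with y hy hyab
  exact hQmono.injective ((hT y hyab).trans hy.symm)

lemma add_deriv_mul_sub_add_sq_le_of_strongConvexOn {V : ℝ → ℝ} {κ : ℝ}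
    (hV : StrongConvexOn univ κ V) (hVd : Differentiable ℝ V) (x y : ℝ) :
    V x + deriv V x * (y - x) + κ / 2 * (y - x) ^ 2 ≤ V y := by
  have hconv := strongConvexOn_iff_convex.1 hV
  have hderiv : HasDerivAt (fun x ↦ V x - κ / 2 * ‖x‖ ^ 2) (deriv V x - κ * x) x := by
    simp only [norm_eq_abs, sq_abs]
    convert! (hVd x).hasDerivAt.sub ((hasDerivAt_pow 2 x).const_mul (κ / 2)) using 1
    ring
  rcases lt_trichotomy x y with hxy | rfl | hxy
  · have := hconv.le_slope_of_hasDerivAt (mem_univ x) (mem_univ y) hxy hderiv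
    rw [slope_def_field, le_div_iff₀ (sub_pos.2 hxy)] at this
    simp only [norm_eq_abs, sq_abs] at this
    linarith
  · simp
  · have := hconv.slope_le_of_hasDerivAt (mem_univ y) (mem_univ x) hxy hderiv
    rw [slope_def_field, div_le_iff₀ (sub_pos.2 hxy)] at this
    simp only [norm_eq_abs, sq_abs] at this
    linarith

variable {V : ℝ → ℝ} {κ : ℝ}

-- With `D = T'(x)`, `t = T x`: the right side times `exp (-V x)` is the derivative of
-- `(T x - x) * exp (-V x) * g x`.
lemma mul_log_sub_le_of_strongConvexOn (hV : StrongConvexOn univ κ V) (hVd : Differentiable ℝ V)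
    (hκ : 0 < κ) {g d m D x t : ℝ} (hg : 0 < g) (hm : 0 < m)
    (hD : D = exp (-V x) * g / (m * exp (-V t))) :
    g * log g - g * log m - κ⁻¹ / 2 * (d ^ 2 / g) ≤
      (D - 1) * g + (t - x) * (d - deriv V x * g) := by
  have hlog : log D = log g - log m + (V t - V x) := by
    rw [hD, log_div (by positivity) (by positivity), log_mul (by positivity) hg.ne',
      log_mul hm.ne' (by positivity), log_exp, log_exp]
    ring
  have hDlog : log D ≤ D - 1 := log_le_sub_one_of_pos (hD ▸ by positivity)
  have hconv := add_deriv_mul_sub_add_sq_le_of_strongConvexOn hV hVd x t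
  have hsq : 0 ≤ κ / 2 * (t - x) ^ 2 * g + (t - x) * d + κ⁻¹ / 2 * (d ^ 2 / g) := by
    have : κ / 2 * (t - x) ^ 2 * g + (t - x) * d + κ⁻¹ / 2 * (d ^ 2 / g) =
        (κ * (t - x) * g + d) ^ 2 / (2 * κ * g) := by
      field_simp
      ring
    rw [this]
    positivity
  have := mul_le_mul_of_nonneg_right
    (show log g - log m ≤ D - 1 - deriv V x * (t - x) - κ / 2 * (t - x) ^ 2 by linarith) hg.le
  linarith

lemma intervalIntegral_mul_log_sub_le_of_strongConvexOn (hV : StrongConvexOn univ κ V)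
    (hVd : Differentiable ℝ V) (hκ : 0 < κ) (hab : a ≤ b) {g : ℝ → ℝ} {m : ℝ}
    (hg : ContDiff ℝ 1 g) (hg0 : ∀ x, 0 < g x) (hm : 0 < m)
    (hmass : ∫ x in a..b, exp (-V x) * g x = ∫ x in a..b, m * exp (-V x)) :
    ∫ x in a..b, exp (-V x) * (g x * log (g x) - g x * log m - κ⁻¹ / 2 * (deriv g x ^ 2 / g x))
      ≤ 0 := by
  have hw : Continuous fun x ↦ exp (-V x) := hVd.continuous.neg.rexp
  have hwgc : Continuous fun x ↦ exp (-V x) * g x := hw.mul hg.continuous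
  obtain ⟨T, hTa, hTb, hT⟩ := exists_transport_fixing_endpoints hab hwgc (hw.const_mul m)
    (fun x ↦ (mul_pos (exp_pos _) (hg0 x)).le) (fun x ↦ mul_pos hm (exp_pos _)) hmass
  have hwg (x : ℝ) : HasDerivAt (fun x ↦ exp (-V x) * g x)
      (exp (-V x) * -deriv V x * g x + exp (-V x) * deriv g x) x :=
    (hVd x).hasDerivAt.neg.exp.mul (hg.differentiable one_ne_zero x).hasDerivAt
  have hB (x : ℝ) (hx : x ∈ Icc a b) :=
    ((hT x hx).sub (hasDerivWithinAt_id x _)).mul (hwg x).hasDerivWithinAt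
  have hcont : Continuous fun x ↦
      exp (-V x) * (g x * log (g x) - g x * log m - κ⁻¹ / 2 * (deriv g x ^ 2 / g x)) := by
    have := hg.continuous_deriv le_rfl
    have := hg.continuous
    fun_prop (disch := exact fun x ↦ (hg0 x).ne')
  refine (intervalIntegral.integral_le_sub_of_hasDeriv_right_of_le hab
    (fun x hx ↦ (hB x hx).continuousWithinAt)
    (fun x hx ↦ ((hB x (Ioo_subset_Icc_self hx)).hasDerivAt
      (Icc_mem_nhds hx.1 hx.2)).hasDerivWithinAt)
    hcont.integrableOn_Icc fun x _ ↦ ?_).trans_eq ?_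
  · have := mul_log_sub_le_of_strongConvexOn (d := deriv g x) hV hVd hκ (hg0 x) hm
      (rfl : _ = exp (-V x) * g x / (m * exp (-V (T x))))
    refine (mul_le_mul_of_nonneg_left this (exp_pos _).le).trans_eq ?_
    simp only [Pi.sub_apply, id]
    ring
  · simp [hTa, hTb]

lemma intervalIntegral_mul_log_sub_mul_log_le_of_strongConvexOn (hV : StrongConvexOn univ κ V)
    (hVd : Differentiable ℝ V) (hκ : 0 < κ) (hab : a < b) {g : ℝ → ℝ} (hg : ContDiff ℝ 1 g)
    (hg0 : ∀ x, 0 < g x) :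
    (∫ x in a..b, exp (-V x) * (g x * log (g x))) - (∫ x in a..b, exp (-V x) * g x) *
        log ((∫ x in a..b, exp (-V x) * g x) / ∫ x in a..b, exp (-V x)) ≤
      κ⁻¹ / 2 * ∫ x in a..b, exp (-V x) * (deriv g x ^ 2 / g x) := by
  have hw : Continuous fun x ↦ exp (-V x) := hVd.continuous.neg.rexp
  have hgc : Continuous g := hg.continuous
  have hmass_int : IntervalIntegrable (fun x ↦ exp (-V x) * g x) volume a b :=
    (hw.mul hgc).intervalIntegrable _ _
  have hlog_int : IntervalIntegrable (fun x ↦ exp (-V x) * (g x * log (g x))) volume a b :=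
    (hw.mul (continuous_mul_log.comp hgc)).intervalIntegrable _ _
  have hfisher_int : IntervalIntegrable (fun x ↦ exp (-V x) * (deriv g x ^ 2 / g x)) volume a b :=
    (hw.mul (((hg.continuous_deriv le_rfl).pow 2).div hgc fun x ↦ (hg0 x).ne'))
      |>.intervalIntegrable _ _
  set M := ∫ x in a..b, exp (-V x) * g x
  set Z := ∫ x in a..b, exp (-V x)
  have hM : 0 < M := intervalIntegral.intervalIntegral_pos_of_pos hmass_int
    (fun x ↦ mul_pos (exp_pos _) (hg0 x)) hab
  have hZ : 0 < Z := intervalIntegral.intervalIntegral_pos_of_pos (hw.intervalIntegrable _ _)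
    (fun x ↦ exp_pos _) hab
  have hmass : M = ∫ x in a..b, M / Z * exp (-V x) := by
    rw [intervalIntegral.integral_const_mul, div_mul_cancel₀ _ hZ.ne']
  have hle := intervalIntegral_mul_log_sub_le_of_strongConvexOn hV hVd hκ hab.le hg hg0
    (div_pos hM hZ) hmass
  have hsplit (x : ℝ) : exp (-V x) *
      (g x * log (g x) - g x * log (M / Z) - κ⁻¹ / 2 * (deriv g x ^ 2 / g x)) =
      exp (-V x) * (g x * log (g x)) - exp (-V x) * g x * log (M / Z) -
        κ⁻¹ / 2 * (exp (-V x) * (deriv g x ^ 2 / g x)) := by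
    ring
  simp only [hsplit] at hle
  rw [intervalIntegral.integral_sub (hlog_int.sub (hmass_int.mul_const _))
      (hfisher_int.const_mul _), intervalIntegral.integral_sub hlog_int (hmass_int.mul_const _),
    intervalIntegral.integral_mul_const, intervalIntegral.integral_const_mul] at hle
  exact sub_nonpos.1 hle

end MonotoneTransport

section OneDimensional

variable {V φ : ℝ → ℝ}

lemma integral_withDensity_exp_neg (hV : Measurable V) (φ : ℝ → ℝ) :
    ∫ x, φ x ∂volume.withDensity (fun x ↦ ENNReal.ofReal (exp (-V x))) =
      ∫ x, exp (-V x) * φ x := by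
  rw [integral_withDensity_eq_integral_toReal_smul (by fun_prop) (by simp)]
  simp only [ENNReal.toReal_ofReal (exp_pos _).le, smul_eq_mul]

lemma integrable_withDensity_exp_neg_iff (hV : Measurable V) :
    Integrable φ (volume.withDensity fun x ↦ ENNReal.ofReal (exp (-V x))) ↔
      Integrable fun x ↦ exp (-V x) * φ x := by
  rw [integrable_withDensity_iff_integrable_smul' (by fun_prop) (by simp)]
  simp only [ENNReal.toReal_ofReal (exp_pos _).le, smul_eq_mul]

lemma tendsto_intervalIntegral_exp_neg_mul (hV : Measurable V)
    (hφ : Integrable φ (volume.withDensity fun x ↦ ENNReal.ofReal (exp (-V x)))) :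
    Tendsto (fun R ↦ ∫ x in -R..R, exp (-V x) * φ x) atTop
      (𝓝 (∫ x, φ x ∂volume.withDensity fun x ↦ ENNReal.ofReal (exp (-V x)))) := by
  rw [integral_withDensity_exp_neg hV]
  exact intervalIntegral_tendsto_integral ((integrable_withDensity_exp_neg_iff hV).1 hφ)
    tendsto_neg_atTop_atBot tendsto_id

lemma satisfiesLogSobolev_withDensity_of_strongConvexOn {κ : ℝ≥0} (hκ : 0 < κ)
    (hV : StrongConvexOn univ κ V) (hVd : Differentiable ℝ V)
    [IsProbabilityMeasure (volume.withDensity fun x ↦ ENNReal.ofReal (exp (-V x)))] :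
    SatisfiesLogSobolev (volume.withDensity fun x ↦ ENNReal.ofReal (exp (-V x))) κ⁻¹ := by
  intro g hg
  have hVm : Measurable V := hVd.continuous.measurable
  set μ := volume.withDensity fun x ↦ ENNReal.ofReal (exp (-V x))
  have hm : ∫ x, g x ∂μ ≠ 0 := by
    obtain ⟨ε, hε, hle⟩ := hg.exists_pos_le
    have := integral_mono (μ := μ) (integrable_const ε) hg.integrable hle
    simp at this
    linarith
  have hlim {φ : ℝ → ℝ} (hφ : Integrable φ μ) := tendsto_intervalIntegral_exp_neg_mul hVm hφ
  have hmass := hlim (hg.integrable (μ := μ))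
  have htot : Tendsto (fun R ↦ ∫ x in -R..R, exp (-V x)) atTop (𝓝 1) := by
    simpa [μ] using hlim (integrable_const 1)
  have hlog := (hmass.div htot one_ne_zero).log (by simpa using hm)
  rw [div_one] at hlog
  refine le_of_tendsto_of_tendsto ((hlim hg.integrable_mul_log).sub (hmass.mul hlog))
    ((hlim hg.integrable_norm_sq_fderiv_div).const_mul _) ?_
  filter_upwards [eventually_gt_atTop 0] with R hR
  simpa only [Pi.div_apply, NNReal.coe_inv, ← norm_deriv_eq_norm_fderiv, norm_eq_abs, sq_abs] using
    intervalIntegral_mul_log_sub_mul_log_le_of_strongConvexOn (a := -R) (b := R) hV hVd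
      (NNReal.coe_pos.2 hκ) (by linarith) hg.contDiff hg.pos

lemma satisfiesLogSobolev_gaussianReal : SatisfiesLogSobolev (gaussianReal 0 1) 1 := by
  let V (x : ℝ) : ℝ := x ^ 2 / 2 + log (√(2 * π))
  have hVconv : StrongConvexOn univ ((1 : ℝ≥0) : ℝ) V := by
    rw [strongConvexOn_iff_convex]
    convert! convexOn_const (log (√(2 * π))) (convex_univ (𝕜 := ℝ)) using 2
    simp [V]
    ring
  have hVd : Differentiable ℝ V := by fun_prop
  have hexp (x : ℝ) : exp (-V x) = gaussianPDFReal 0 1 x := by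
    rw [neg_add, exp_add, exp_neg (log _), exp_log (by positivity), gaussianPDFReal]
    simp [mul_comm, neg_div]
  have hgauss : gaussianReal 0 1 = volume.withDensity fun x ↦ ENNReal.ofReal (exp (-V x)) := by
    simp only [hexp, gaussianReal_of_var_ne_zero 0 one_ne_zero, gaussianPDF_def]
  have : IsProbabilityMeasure (volume.withDensity fun x ↦ ENNReal.ofReal (exp (-V x))) :=
    hgauss ▸ inferInstance
  simpa [hgauss] using satisfiesLogSobolev_withDensity_of_strongConvexOn one_pos hVconv hVd

end OneDimensional

section Fatou

variable {α : Type*} [MeasurableSpace α] {μ : Measure α} {u : ℕ → α → ℝ} {v l : α → ℝ}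
  {b : ℕ → ℝ} {B : ℝ}

lemma integrable_and_integral_le_of_tendsto (hu : ∀ k, Integrable (u k) μ) (hl : Integrable l μ)
    (hle : ∀ k x, l x ≤ u k x) (hlim : ∀ x, Tendsto (fun k ↦ u k x) atTop (𝓝 (v x)))
    (hb : ∀ k, ∫ x, u k x ∂μ ≤ b k) (hB : Tendsto b atTop (𝓝 B)) :
    Integrable v μ ∧ ∫ x, v x ∂μ ≤ B := by
  have hlv (x : α) : 0 ≤ v x - l x := sub_nonneg.2 (ge_of_tendsto' (hlim x) fun k ↦ hle k x)
  have hvm : AEStronglyMeasurable v μ :=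
    aestronglyMeasurable_of_tendsto_ae atTop (fun k ↦ (hu k).aestronglyMeasurable) (.of_forall hlim)
  have hul (k : ℕ) : Integrable (fun x ↦ u k x - l x) μ := (hu k).sub hl
  have hlk (k : ℕ) : ∫ x, l x ∂μ ≤ b k := (integral_mono hl (hu k) (hle k)).trans (hb k)
  have hlB : 0 ≤ B - ∫ x, l x ∂μ := sub_nonneg.2 (ge_of_tendsto' hB hlk)
  have hfatou : ∫⁻ x, ENNReal.ofReal (v x - l x) ∂μ ≤ ENNReal.ofReal (B - ∫ x, l x ∂μ) := by
    calc ∫⁻ x, ENNReal.ofReal (v x - l x) ∂μ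
        = ∫⁻ x, liminf (fun k ↦ ENNReal.ofReal (u k x - l x)) atTop ∂μ :=
          lintegral_congr fun x ↦
            (ENNReal.tendsto_ofReal ((hlim x).sub_const (l x))).liminf_eq.symm
      _ ≤ liminf (fun k ↦ ∫⁻ x, ENNReal.ofReal (u k x - l x) ∂μ) atTop :=
          lintegral_liminf_le' fun k ↦ (hul k).aemeasurable.ennreal_ofReal
      _ ≤ liminf (fun k ↦ ENNReal.ofReal (b k - ∫ x, l x ∂μ)) atTop := by
          refine liminf_le_liminf (.of_forall fun k ↦ ?_)
          rw [← ofReal_integral_eq_lintegral_ofReal (hul k)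
            (.of_forall fun x ↦ sub_nonneg.2 (hle k x)), integral_sub (hu k) hl]
          gcongr
          exact hb k
      _ = ENNReal.ofReal (B - ∫ x, l x ∂μ) :=
          (ENNReal.tendsto_ofReal (hB.sub_const _)).liminf_eq
  have hvl : Integrable (fun x ↦ v x - l x) μ :=
    (lintegral_ofReal_ne_top_iff_integrable (hvm.sub hl.aestronglyMeasurable)
      (.of_forall hlv)).1 (hfatou.trans_lt ENNReal.ofReal_lt_top).ne
  have hv : Integrable v μ := (hvl.add hl).congr (.of_forall fun x ↦ sub_add_cancel _ _)
  refine ⟨hv, ?_⟩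
  rw [← ofReal_integral_eq_lintegral_ofReal hvl (.of_forall hlv),
    ENNReal.ofReal_le_ofReal_iff hlB, integral_sub hv hl] at hfatou
  linarith

end Fatou

section Cutoff

variable {E : Type*} [NormedAddCommGroup E] [NormedSpace ℝ E] {χ : ℕ → E → ℝ} {f : E → ℝ}

/-- A sequence of compactly supported `C¹` functions exhausting the space: values in `[0, 1]`,
derivatives bounded uniformly in the index, and eventually equal to `1` near each point. -/
structure IsCutoffSeq (χ : ℕ → E → ℝ) : Prop where
  contDiff : ∀ k, ContDiff ℝ 1 (χ k)
  hasCompactSupport : ∀ k, HasCompactSupport (χ k)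
  mem_Icc : ∀ k x, χ k x ∈ Icc (0 : ℝ) 1
  exists_norm_fderiv_le : ∃ C, ∀ k x, ‖fderiv ℝ (χ k) x‖ ≤ C
  eventuallyEq_one : ∀ x, ∀ᶠ k in atTop, χ k =ᶠ[𝓝 x] 1

lemma exists_isCutoffSeq (E : Type*) [NormedAddCommGroup E] [NormedSpace ℝ E]
    [FiniteDimensional ℝ E] : ∃ χ : ℕ → E → ℝ, IsCutoffSeq χ := by
  let φ : ContDiffBump (0 : E) := ⟨1, 2, one_pos, one_lt_two⟩
  let r (k : ℕ) : ℝ := 1 / (k + 1)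
  have hr0 (k : ℕ) : 0 < r k := by positivity
  have hr1 (k : ℕ) : r k ≤ 1 := div_le_one_of_le₀ (by simp) (by positivity)
  have hφ : ContDiff ℝ 1 φ := φ.contDiff
  refine ⟨fun k x ↦ φ (r k • x), fun k ↦ hφ.comp (contDiff_const_smul (r k)),
    fun k ↦ φ.hasCompactSupport.comp_smul (hr0 k).ne', fun k x ↦ ⟨φ.nonneg, φ.le_one⟩, ?_,
    fun x ↦ ?_⟩
  · obtain ⟨C, hC⟩ := (hφ.continuous_fderiv one_ne_zero).bounded_above_of_compact_support
      (φ.hasCompactSupport.fderiv ℝ)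
    refine ⟨C, fun k x ↦ ?_⟩
    rw [fderiv_comp_smul, norm_smul, norm_of_nonneg (hr0 k).le]
    exact (mul_le_of_le_one_left (norm_nonneg _) (hr1 k)).trans (hC _)
  · have hlim : Tendsto (fun k ↦ r k • x) atTop (𝓝 0) := by
      simpa [r] using (tendsto_one_div_add_atTop_nhds_zero_nat (𝕜 := ℝ)).smul_const x
    filter_upwards [hlim.eventually (Metric.ball_mem_nhds 0 one_pos)] with k hk
    have hcont : Continuous fun y : E ↦ r k • y := continuous_const_smul _
    exact hcont.continuousAt.eventually (φ.eventuallyEq_one_of_mem_ball hk)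

namespace IsCutoffSeq

variable [MeasurableSpace E] [OpensMeasurableSpace E] {μ : Measure E}

lemma tendsto_integral_mul_sq (hχ : IsCutoffSeq χ) (hf : Continuous f)
    (hf2 : Integrable (fun x ↦ f x ^ 2) μ) :
    Tendsto (fun k ↦ ∫ x, (χ k x * f x) ^ 2 ∂μ) atTop (𝓝 (∫ x, f x ^ 2 ∂μ)) := by
  refine tendsto_integral_of_dominated_convergence (fun x ↦ f x ^ 2)
    (fun k ↦ (((hχ.contDiff k).continuous.mul hf).pow 2).aestronglyMeasurable) hf2
    (fun k ↦ .of_forall fun x ↦ ?_) (.of_forall fun x ↦ ?_)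
  · rw [norm_of_nonneg (sq_nonneg _), mul_pow]
    exact mul_le_of_le_one_left (sq_nonneg _) (pow_le_one₀ (hχ.mem_Icc k x).1 (hχ.mem_Icc k x).2)
  · refine tendsto_const_nhds.congr' ?_
    filter_upwards [hχ.eventuallyEq_one x] with k hk
    simp [hk.eq_of_nhds]

lemma tendsto_integral_norm_sq_fderiv_mul (hχ : IsCutoffSeq χ) (hf : ContDiff ℝ 1 f)
    (hf2 : Integrable (fun x ↦ f x ^ 2) μ)
    (hDf : Integrable (fun x ↦ ‖fderiv ℝ f x‖ ^ 2) μ) :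
    Tendsto (fun k ↦ ∫ x, ‖fderiv ℝ (fun x ↦ χ k x * f x) x‖ ^ 2 ∂μ) atTop
      (𝓝 (∫ x, ‖fderiv ℝ f x‖ ^ 2 ∂μ)) := by
  obtain ⟨C, hC⟩ := hχ.exists_norm_fderiv_le
  have hdiff (k : ℕ) : ContDiff ℝ 1 fun x ↦ χ k x * f x := (hχ.contDiff k).mul hf
  refine tendsto_integral_of_dominated_convergence
    (fun x ↦ 2 * ‖fderiv ℝ f x‖ ^ 2 + 2 * C ^ 2 * f x ^ 2)
    (fun k ↦ (((hdiff k).continuous_fderiv one_ne_zero).norm.pow 2).aestronglyMeasurable)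
    ((hDf.const_mul 2).add (hf2.const_mul _)) (fun k ↦ .of_forall fun x ↦ ?_)
    (.of_forall fun x ↦ ?_)
  · have hnorm : ‖fderiv ℝ (fun x ↦ χ k x * f x) x‖ ≤ ‖fderiv ℝ f x‖ + |f x| * C := by
      rw [fderiv_fun_mul ((hχ.contDiff k).differentiable one_ne_zero x)
        (hf.differentiable one_ne_zero x)]
      refine (norm_add_le _ _).trans ?_
      rw [norm_smul, norm_smul, norm_of_nonneg (hχ.mem_Icc k x).1, norm_eq_abs]
      gcongr
      · exact mul_le_of_le_one_left (norm_nonneg _) (hχ.mem_Icc k x).2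
      · exact hC k x
    rw [norm_of_nonneg (sq_nonneg _)]
    calc ‖fderiv ℝ (fun x ↦ χ k x * f x) x‖ ^ 2 ≤ (‖fderiv ℝ f x‖ + |f x| * C) ^ 2 := by gcongr
      _ ≤ 2 * (‖fderiv ℝ f x‖ ^ 2 + (|f x| * C) ^ 2) := add_sq_le
      _ = 2 * ‖fderiv ℝ f x‖ ^ 2 + 2 * C ^ 2 * f x ^ 2 := by rw [mul_pow, sq_abs]; ring
  · refine tendsto_const_nhds.congr' ?_
    filter_upwards [hχ.eventuallyEq_one x] with k hk
    have : (fun x ↦ χ k x * f x) =ᶠ[𝓝 x] f := by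
      filter_upwards [hk] with y hy
      simp [hy]
    rw [this.fderiv_eq]

end IsCutoffSeq

end Cutoff

lemma hasFDerivAt_sq_add_const {E : Type*} [NormedAddCommGroup E] [NormedSpace ℝ E] {f : E → ℝ}
    {f' : E →L[ℝ] ℝ} {x : E} (hf : HasFDerivAt f f' x) (ε : ℝ) :
    HasFDerivAt (fun y ↦ f y ^ 2 + ε) ((2 * f x) • f') x := by
  simpa using (hf.pow 2).add_const ε

lemma IsTestDensity.sq_add_const {E : Type*} [NormedAddCommGroup E] [NormedSpace ℝ E] {f : E → ℝ}
    (hf : ContDiff ℝ 1 f) (hsupp : HasCompactSupport f) {ε : ℝ} (hε : 0 < ε) :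
    IsTestDensity fun x ↦ f x ^ 2 + ε := by
  obtain ⟨M, hM⟩ := hf.continuous.bounded_above_of_compact_support hsupp
  obtain ⟨K, hK⟩ := (hf.continuous_fderiv one_ne_zero).bounded_above_of_compact_support
    (hsupp.fderiv ℝ)
  refine ⟨(hf.pow 2).add contDiff_const, ⟨ε, hε, fun x ↦ le_add_of_nonneg_left (sq_nonneg _)⟩,
    ⟨M ^ 2 + ε, fun x ↦ ?_⟩, ⟨2 * M * K, fun x ↦ ?_⟩⟩
  · rw [← sq_abs, ← norm_eq_abs]
    gcongr
    exact hM x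
  · rw [(hasFDerivAt_sq_add_const (hf.differentiable one_ne_zero x).hasFDerivAt ε).fderiv,
      norm_smul, norm_mul, norm_two]
    have hM0 := (norm_nonneg _).trans (hM x)
    gcongr
    exacts [hM x, hK x]

namespace SatisfiesLogSobolev

variable {E : Type*} [NormedAddCommGroup E] [NormedSpace ℝ E]
  [MeasurableSpace E] [BorelSpace E] {μ : Measure E} {c : ℝ≥0} {f : E → ℝ}

lemma entropy_sq_add_const_le [IsFiniteMeasureOnCompacts μ] (h : SatisfiesLogSobolev μ c)
    (hf : ContDiff ℝ 1 f) (hsupp : HasCompactSupport f) {ε : ℝ} (hε : 0 < ε) :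
    entropy μ (fun x ↦ f x ^ 2 + ε) ≤ 2 * c * ∫ x, ‖fderiv ℝ f x‖ ^ 2 ∂μ := by
  have hDsupp : HasCompactSupport fun x ↦ ‖fderiv ℝ f x‖ ^ 2 :=
    (hsupp.fderiv ℝ).comp_left (g := fun L : E →L[ℝ] ℝ ↦ ‖L‖ ^ 2) (by simp)
  have hDf : Integrable (fun x ↦ ‖fderiv ℝ f x‖ ^ 2) μ :=
    ((hf.continuous_fderiv one_ne_zero).norm.pow 2).integrable_of_hasCompactSupport hDsupp
  have hle (x : E) : ‖fderiv ℝ (fun y ↦ f y ^ 2 + ε) x‖ ^ 2 / (f x ^ 2 + ε) ≤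
      4 * ‖fderiv ℝ f x‖ ^ 2 := by
    rw [(hasFDerivAt_sq_add_const (hf.differentiable one_ne_zero x).hasFDerivAt ε).fderiv,
      norm_smul, mul_pow, norm_eq_abs, sq_abs, div_le_iff₀ (by positivity)]
    nlinarith [mul_nonneg hε.le (sq_nonneg ‖fderiv ℝ f x‖)]
  calc entropy μ (fun x ↦ f x ^ 2 + ε)
      ≤ c / 2 * ∫ x, ‖fderiv ℝ (fun y ↦ f y ^ 2 + ε) x‖ ^ 2 / (f x ^ 2 + ε) ∂μ :=
        h (.sq_add_const hf hsupp hε)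
    _ ≤ c / 2 * ∫ x, 4 * ‖fderiv ℝ f x‖ ^ 2 ∂μ := by
        refine mul_le_mul_of_nonneg_left ?_ (by positivity)
        exact integral_mono_of_nonneg (.of_forall fun x ↦ by positivity) (hDf.const_mul 4)
          (.of_forall hle)
    _ = 2 * c * ∫ x, ‖fderiv ℝ f x‖ ^ 2 ∂μ := by rw [integral_const_mul]; ring

theorem integrable_mul_log_sq_and_entropy_sq_le [FiniteDimensional ℝ E] [IsProbabilityMeasure μ]
    (h : SatisfiesLogSobolev μ c) (hf : ContDiff ℝ 1 f) (hf2 : Integrable (fun x ↦ f x ^ 2) μ)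
    (hDf : Integrable (fun x ↦ ‖fderiv ℝ f x‖ ^ 2) μ) :
    Integrable (fun x ↦ f x ^ 2 * log (f x ^ 2)) μ ∧
      entropy μ (fun x ↦ f x ^ 2) ≤ 2 * c * ∫ x, ‖fderiv ℝ f x‖ ^ 2 ∂μ := by
  obtain ⟨χ, hχ⟩ := exists_isCutoffSeq E
  let F (k : ℕ) (x : E) : ℝ := χ k x * f x
  let ε (k : ℕ) : ℝ := 1 / (k + 1)
  let g (k : ℕ) (x : E) : ℝ := F k x ^ 2 + ε k
  have hF (k : ℕ) : ContDiff ℝ 1 (F k) := (hχ.contDiff k).mul hf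
  have hsupp (k : ℕ) : HasCompactSupport (F k) := (hχ.hasCompactSupport k).mul_right
  have hε (k : ℕ) : 0 < ε k := by positivity
  have hεlim : Tendsto ε atTop (𝓝 0) := tendsto_one_div_add_atTop_nhds_zero_nat
  have hg (k : ℕ) : IsTestDensity (g k) := .sq_add_const (hF k) (hsupp k) (hε k)
  have hglim (x : E) : Tendsto (fun k ↦ g k x) atTop (𝓝 (f x ^ 2)) := by
    rw [← add_zero (f x ^ 2)]
    refine .add (tendsto_const_nhds.congr' ?_) hεlim
    filter_upwards [hχ.eventuallyEq_one x] with k hk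
    simp [F, hk.eq_of_nhds]
  have hmass : Tendsto (fun k ↦ ∫ x, g k x ∂μ) atTop (𝓝 (∫ x, f x ^ 2 ∂μ)) := by
    have hsq (k : ℕ) : Integrable (fun x ↦ F k x ^ 2) μ :=
      ((hg k).integrable.sub (integrable_const (ε k))).congr
        (.of_forall fun x ↦ add_sub_cancel_right _ _)
    simpa [g, integral_add (hsq _) (integrable_const _)] using
      (hχ.tendsto_integral_mul_sq hf.continuous hf2).add hεlim
  have hbound (k : ℕ) : ∫ x, g k x * log (g k x) ∂μ ≤
      2 * c * ∫ x, ‖fderiv ℝ (F k) x‖ ^ 2 ∂μ + (∫ x, g k x ∂μ) * log (∫ x, g k x ∂μ) :=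
    sub_le_iff_le_add.1 (h.entropy_sq_add_const_le (hF k) (hsupp k) (hε k))
  have hle (k : ℕ) (x : E) : -1 ≤ g k x * log (g k x) := by
    linarith [self_sub_one_le_mul_log ((hg k).pos x).le, (hg k).pos x]
  obtain ⟨hint, hlim⟩ := integrable_and_integral_le_of_tendsto
    (fun k ↦ (hg k).integrable_mul_log) (integrable_const (-1)) hle
    (fun x ↦ (continuous_mul_log.tendsto _).comp (hglim x)) hbound
    (((hχ.tendsto_integral_norm_sq_fderiv_mul hf hf2 hDf).const_mul _).add
      ((continuous_mul_log.tendsto _).comp hmass))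
  exact ⟨hint, sub_le_iff_le_add.2 hlim⟩

end SatisfiesLogSobolev

section Gaussian

lemma stdGaussian_real : stdGaussian ℝ = gaussianReal 0 1 := by
  refine Measure.ext_of_charFun (funext fun t ↦ ?_)
  rw [charFun_stdGaussian, charFun_gaussianReal]
  simp [← Complex.ofReal_pow, neg_div]

variable {E : Type*} [NormedAddCommGroup E] [InnerProductSpace ℝ E] [FiniteDimensional ℝ E]
  [MeasurableSpace E] [BorelSpace E]

section Prod

variable {F : Type*} [NormedAddCommGroup F] [InnerProductSpace ℝ F] [FiniteDimensional ℝ F]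
  [MeasurableSpace F] [BorelSpace F]

lemma map_toLp_prod_stdGaussian :
    ((stdGaussian E).prod (stdGaussian F)).map (WithLp.toLp 2) =
      stdGaussian (WithLp 2 (E × F)) := by
  refine Measure.ext_of_charFun (funext fun t ↦ ?_)
  rw [charFun_prod, charFun_stdGaussian, charFun_stdGaussian, charFun_stdGaussian,
    ← Complex.exp_add]
  norm_cast
  rw [WithLp.prod_norm_sq_eq_of_L2, neg_add, add_div]
  rfl

lemma SatisfiesLogSobolev.stdGaussian_of_finrank_eq {c : ℝ≥0}
    (h : SatisfiesLogSobolev (stdGaussian E) c)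
    (hEF : Module.finrank ℝ E = Module.finrank ℝ F) :
    SatisfiesLogSobolev (stdGaussian F) c := by
  rw [← stdGaussian_map ((stdOrthonormalBasis ℝ E).equiv (stdOrthonormalBasis ℝ F)
    (finCongr hEF))]
  exact h.map _

end Prod

lemma entropy_of_subsingleton {α : Type*} [MeasurableSpace α] [Subsingleton α] (μ : Measure α)
    [IsProbabilityMeasure μ] (g : α → ℝ) : entropy μ g = 0 := by
  obtain ⟨a⟩ := μ.nonempty_of_neZero
  have hg : g = fun _ ↦ g a := funext fun x ↦ congrArg g (Subsingleton.elim x a)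
  rw [hg]
  simp [entropy]

lemma SatisfiesLogSobolev.of_subsingleton {G : Type*} [NormedAddCommGroup G] [NormedSpace ℝ G]
    [MeasurableSpace G] [Subsingleton G] (μ : Measure G) [IsProbabilityMeasure μ] (c : ℝ≥0) :
    SatisfiesLogSobolev μ c := by
  intro g hg
  rw [entropy_of_subsingleton]
  exact mul_nonneg (by positivity)
    (integral_nonneg fun x ↦ div_nonneg (sq_nonneg _) (hg.pos x).le)

theorem satisfiesLogSobolev_stdGaussian (E : Type*) [NormedAddCommGroup E]
    [InnerProductSpace ℝ E] [FiniteDimensional ℝ E] [MeasurableSpace E] [BorelSpace E] :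
    SatisfiesLogSobolev (stdGaussian E) 1 := by
  suffices h : ∀ n, SatisfiesLogSobolev (stdGaussian (EuclideanSpace ℝ (Fin n))) 1 from
    (h (Module.finrank ℝ E)).stdGaussian_of_finrank_eq (by simp)
  intro n
  induction n with
  | zero => exact .of_subsingleton _ _
  | succ n ih =>
    have h := satisfiesLogSobolev_gaussianReal.prod ih
    rw [← stdGaussian_real, map_toLp_prod_stdGaussian] at h
    refine h.stdGaussian_of_finrank_eq ?_
    rw [(WithLp.linearEquiv 2 ℝ (ℝ × EuclideanSpace ℝ (Fin n))).finrank_eq]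
    simp [add_comm]

lemma integrable_exp_neg_sq_norm_div_two : Integrable fun x : E ↦ exp (-‖x‖ ^ 2 / 2) := by
  refine .of_integral_ne_zero ?_
  have h := GaussianFourier.integral_rexp_neg_mul_sq_norm (V := E) (b := 1 / 2) (by norm_num)
  simp only [neg_div, neg_mul, one_div_mul_eq_div] at h ⊢
  rw [h]
  positivity

lemma integral_cexp_neg_sq_norm_div_two_add_inner (t : E) :
    ∫ x : E, Complex.exp (-‖x‖ ^ 2 / 2 + inner ℝ x t * Complex.I) =
      ((2 * π) ^ ((Module.finrank ℝ E : ℝ) / 2) : ℝ) * Complex.exp (-‖t‖ ^ 2 / 2) := by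
  have h := GaussianFourier.integral_cexp_neg_mul_sq_norm_add (V := E) (b := 1 / 2) (by norm_num)
    Complex.I t
  convert! h using 2
  · ext x
    rw [real_inner_comm]
    ring_nf
  · rw [Complex.ofReal_cpow (by positivity)]
    push_cast
    ring_nf
  · rw [Complex.I_sq]
    ring_nf

lemma stdGaussian_eq_withDensity :
    stdGaussian E = volume.withDensity fun x ↦
      ENNReal.ofReal ((2 * π) ^ (-(Module.finrank ℝ E : ℝ) / 2) * exp (-‖x‖ ^ 2 / 2)) := by
  set Z : ℝ := (2 * π) ^ (-(Module.finrank ℝ E : ℝ) / 2) with hZ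
  have : IsFiniteMeasure (volume.withDensity fun x : E ↦
      ENNReal.ofReal (Z * exp (-‖x‖ ^ 2 / 2))) :=
    isFiniteMeasure_withDensity_ofReal
      (integrable_exp_neg_sq_norm_div_two.const_mul Z).hasFiniteIntegral
  refine Measure.ext_of_charFun (funext fun t ↦ ?_)
  have hdensity (x : E) : (ENNReal.ofReal (Z * exp (-‖x‖ ^ 2 / 2))).toReal •
      Complex.exp (inner ℝ x t * Complex.I) =
        Z * Complex.exp (-‖x‖ ^ 2 / 2 + inner ℝ x t * Complex.I) := by
    rw [ENNReal.toReal_ofReal (by positivity), Complex.real_smul, Complex.exp_add]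
    push_cast
    ring
  rw [charFun_stdGaussian, charFun_apply, integral_withDensity_eq_integral_toReal_smul
    (by fun_prop) (.of_forall fun x ↦ ENNReal.ofReal_lt_top)]
  simp only [hdensity]
  rw [integral_const_mul, integral_cexp_neg_sq_norm_div_two_add_inner, ← mul_assoc,
    ← Complex.ofReal_mul, hZ, ← rpow_add (by positivity)]
  simp [neg_div]

lemma gaussianMeasureN_eq_stdGaussian (n : ℕ) :
    gaussianMeasureN n = stdGaussian (EuclideanSpace ℝ (Fin n)) := by
  rw [stdGaussian_eq_withDensity, finrank_euclideanSpace_fin, gaussianMeasureN]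

end Gaussian

lemma norm_gradient {E : Type*} [NormedAddCommGroup E] [InnerProductSpace ℝ E] [CompleteSpace E]
    (f : E → ℝ) (x : E) : ‖gradient f x‖ = ‖fderiv ℝ f x‖ := by
  rw [← toDual_gradient, LinearIsometryEquiv.norm_map]

theorem gaussian_log_sobolev_general {E : Type*} [NormedAddCommGroup E] [InnerProductSpace ℝ E]
    [FiniteDimensional ℝ E] [MeasurableSpace E] [BorelSpace E] {f : E → ℝ} (hf : ContDiff ℝ 1 f)
    (hf2 : Integrable (fun x ↦ f x ^ 2) (stdGaussian E))
    (hgrad : Integrable (fun x ↦ ‖gradient f x‖ ^ 2) (stdGaussian E)) :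
    Integrable (fun x ↦ f x ^ 2 * log (f x ^ 2 / ∫ y, f y ^ 2 ∂stdGaussian E)) (stdGaussian E) ∧
      ∫ x, f x ^ 2 * log (f x ^ 2 / ∫ y, f y ^ 2 ∂stdGaussian E) ∂stdGaussian E ≤
        2 * ∫ x, ‖gradient f x‖ ^ 2 ∂stdGaussian E := by
  simp only [norm_gradient] at hgrad ⊢
  obtain ⟨hlog, hent⟩ :=
    (satisfiesLogSobolev_stdGaussian E).integrable_mul_log_sq_and_entropy_sq_le hf hf2 hgrad
  have hf0 : 0 ≤ fun x ↦ f x ^ 2 := fun x ↦ sq_nonneg _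
  rw [integrable_congr (mul_log_div_integral_ae_eq hf2 hf0),
    integral_mul_log_div_integral hf2 hf0 hlog]
  exact ⟨hlog.sub (hf2.mul_const _), by simpa using hent⟩

/-- The Gaussian logarithmic Sobolev inequality: for smooth `f` with `f²`,
`|∇f|²` and `f² log(f²/‖f‖²)` integrable against `γ_n`,
`∫ f² log(f²/‖f‖²_{L²(γ_n)}) dγ_n ≤ 2 ∫ |∇f|² dγ_n`. -/
theorem gaussian_log_sobolev (n : ℕ) (f : EuclideanSpace ℝ (Fin n) → ℝ)
    (hf : ContDiff ℝ (⊤ : ℕ∞) f)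
    (h1 : Integrable (fun x => (f x) ^ 2) (gaussianMeasureN n))
    (h2 : Integrable (fun x => ‖gradient f x‖ ^ 2) (gaussianMeasureN n))
    (h3 : Integrable
      (fun x => (f x) ^ 2 *
        Real.log ((f x) ^ 2 / ∫ y, (f y) ^ 2 ∂(gaussianMeasureN n)))
      (gaussianMeasureN n)) :
    ∫ x, (f x) ^ 2 *
        Real.log ((f x) ^ 2 / ∫ y, (f y) ^ 2 ∂(gaussianMeasureN n))
        ∂(gaussianMeasureN n)
      ≤ 2 * ∫ x, ‖gradient f x‖ ^ 2 ∂(gaussianMeasureN n) := by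
  rw [gaussianMeasureN_eq_stdGaussian] at h1 h2 ⊢
  exact (gaussian_log_sobolev_general (hf.of_le (mod_cast le_top)) h1 h2).2
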